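/- Let d ≥ 1 and 0 < β < min{2, 4-d} (so that β > 0). Define ψ(ρ) = F(-β/2, -1; d/2; ρ) = 1 + (β/d)ρ for 0 ≤ ρ ≤ 1 and ψ(ρ) = (Γ(d/2)/(Γ(2-β/2)Γ((β+d)/2))) ρ^{β/2} F(-β/2, (2-β-d)/2; 2-β/2; ρ^{-1}) for ρ > 1. Then ψ is continuously differentiable on [0,∞), is concave on (1,∞), and satisfies ψ(ρ) ≤ ψ(1) + ψ'(1)(ρ - 1) for all ρ ≥ 1. -/

import Mathlib

open Real Set MeasureTheory

/-- Pochhammer symbol (rising factorial) for a real argument. -/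
noncomputable def poch (x : ℝ) (n : ℕ) : ℝ := ∏ i ∈ Finset.range n, (x + i)

/-- Gauss hypergeometric series. -/
noncomputable def hyperF (a b c z : ℝ) : ℝ :=
  ∑' n : ℕ, poch a n * poch b n / (poch c n * (n.factorial : ℝ)) * z ^ n


lemma poch_succ' (x : ℝ) (n : ℕ) : poch x (n + 1) = poch x n * (x + n) := by
  simp [poch, Finset.prod_range_succ]

lemma poch_eq_asc (x : ℝ) (n : ℕ) : poch x n = (ascPochhammer ℕ n).smeval x := by
  rw [← Polynomial.ascPochhammer_smeval_cast ℝ, ← Polynomial.eval_eq_smeval]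
  induction n with
  | zero => simp [poch]
  | succ n ih => rw [poch_succ', ih, ascPochhammer_succ_eval]

lemma poch_pos' {x : ℝ} (hx : 0 < x) (n : ℕ) : 0 < poch x n := by
  unfold poch
  exact Finset.prod_pos fun i _ => by positivity

lemma choose_poch (b : ℝ) (n : ℕ) :
    Ring.choose (b + n - 1) n = poch b n / (n.factorial : ℝ) := by
  rw [poch_eq_asc, ← Ring.factorial_nsmul_multichoose_eq_ascPochhammer, Ring.choose]
  have h : ((n.factorial : ℕ) : ℝ) ≠ 0 := by positivity
  rw [nsmul_eq_mul, mul_div_cancel_left₀ _ h]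
  congr 1
  ring

lemma binom_hasSum (b x : ℝ) (hx0 : 0 ≤ x) (hx : x < 1) :
    HasSum (fun n : ℕ => poch b n / (n.factorial : ℝ) * x ^ n) ((1 - x) ^ (-b)) := by
  have h := (Real.one_div_one_sub_rpow_hasFPowerSeriesOnBall_zero b).hasSum (y := x)
    (by simpa [Real.enorm_eq_ofReal hx0] using hx)
  simp only [zero_add, one_div, FormalMultilinearSeries.ofScalars_apply_eq, smul_eq_mul,
    choose_poch] at h
  rw [Real.rpow_neg (by linarith)]
  exact h

lemma binom_abs_summable (b x : ℝ) (hx0 : 0 ≤ x) (hx : x < 1) :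
    Summable (fun n : ℕ => |poch b n / (n.factorial : ℝ)| * x ^ n) := by
  have := (binom_hasSum b x hx0 hx).summable.abs
  simpa [abs_mul, abs_of_nonneg hx0] using this

/-- Incomplete beta function. -/
noncomputable def incB (s b x : ℝ) : ℝ := ∫ t in (0:ℝ)..x, t ^ (s - 1) * (1 - t) ^ (-b)

lemma incB_hasSum (s b z : ℝ) (hs : 0 < s) (hz0 : 0 < z) (hz : z < 1) :
    HasSum (fun n : ℕ => poch b n / (n.factorial : ℝ) / (s + n) * z ^ n)
      (z ^ (-s) * incB s b z) := by
  have key : HasSum (fun n : ℕ => ∫ t in (0:ℝ)..z,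
      t ^ (s - 1) * (poch b n / (n.factorial : ℝ) * t ^ n)) (incB s b z) := by
    unfold incB
    apply intervalIntegral.hasSum_integral_of_dominated_convergence
      (fun n t => |poch b n / (n.factorial : ℝ)| * z ^ n * t ^ (s - 1))
    · intro n
      exact (by fun_prop : Measurable _).aestronglyMeasurable
    · intro n
      refine Filter.Eventually.of_forall fun t ht => ?_
      rw [uIoc_of_le hz0.le] at ht
      have h1 : t ^ n ≤ z ^ n := pow_le_pow_left₀ ht.1.le ht.2 n
      have h2 : 0 < t ^ (s - 1) := Real.rpow_pos_of_pos ht.1 _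
      rw [Real.norm_eq_abs, abs_mul, abs_mul, abs_of_pos h2, abs_of_pos (pow_pos ht.1 n), mul_comm]
      gcongr
    · refine Filter.Eventually.of_forall fun t ht => ?_
      exact (binom_abs_summable b z hz0.le hz).mul_right _
    · simp_rw [tsum_mul_right]
      exact (intervalIntegral.intervalIntegrable_rpow' (by linarith)).const_mul _
    · refine Filter.Eventually.of_forall fun t ht => ?_
      rw [uIoc_of_le hz0.le] at ht
      exact (binom_hasSum b t ht.1.le (ht.2.trans_lt hz)).mul_left _
  refine (key.mul_left (z ^ (-s))).congr_fun ?_ |> fun h => h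
  intro n
  have hsn : 0 < s + n := by positivity
  have : ∫ t in (0:ℝ)..z, t ^ (s - 1) * (poch b n / (n.factorial : ℝ) * t ^ n)
      = poch b n / (n.factorial : ℝ) * (z ^ (s + n) / (s + n)) := by
    have e : ∫ t in (0:ℝ)..z, t ^ (s - 1) * (poch b n / (n.factorial : ℝ) * t ^ n)
        = ∫ t in (0:ℝ)..z, poch b n / (n.factorial : ℝ) * t ^ (s - 1 + n) := by
      apply intervalIntegral.integral_congr_ae
      refine Filter.Eventually.of_forall fun t ht => ?_
      rw [uIoc_of_le hz0.le] at ht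
      simp only [Real.rpow_add_natCast ht.1.ne']
      ring
    rw [e, intervalIntegral.integral_const_mul, integral_rpow (Or.inl (by linarith [hsn]))]
    rw [show s - 1 + n + 1 = s + n by ring, Real.zero_rpow hsn.ne', sub_zero]
  rw [this, Real.rpow_add_natCast hz0.ne', Real.rpow_neg hz0.le]
  have : z ^ s ≠ 0 := (Real.rpow_pos_of_pos hz0 _).ne'
  field_simp

lemma hyper_coef (s : ℝ) (hs : 0 < s) (n : ℕ) :
    poch (s - 1) n / poch (s + 1) n * ((s + n - 1) * (s + n)) = s * (s - 1) := by
  induction n with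
  | zero => simp [poch]; ring
  | succ n ih =>
    rw [poch_succ', poch_succ']
    have h1 := (poch_pos' (show 0 < s + 1 by linarith) n).ne'
    have h2 : s + 1 + n ≠ 0 := by positivity
    rw [← ih]
    push_cast
    field_simp
    ring

lemma hyper_eq (s b z : ℝ) (hs : 0 < s) (hz0 : 0 < z) (hz : z < 1) :
    hyperF (s - 1) b (s + 1) z =
      s * (1 - z) * (1 - z) ^ (-b) + ((1 - s) - (b - s) * z) * (s * (z ^ (-s) * incB s b z)) := by
  have hA := binom_hasSum b z hz0.le hz
  have hB := incB_hasSum s b z hs hz0 hz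
  set A := (1 - z) ^ (-b)
  set B := z ^ (-s) * incB s b z
  set e : ℕ → ℝ := fun n => poch b n / (n.factorial : ℝ) with he
  have hC := ((hA.mul_left (-s * z)).add (hB.mul_left (-(b - s) * s * z)))
  have hD := ((hA.mul_left s).add (hB.mul_left ((1 - s) * s)))
  have hE : HasSum (fun n : ℕ => Nat.casesOn n (0:ℝ) fun n => (-s * z * (e n * z ^ n) +
      -(b - s) * s * z * (e n / (s + n) * z ^ n))) (-s * z * A + -(b - s) * s * z * B) := by
    rw [← hasSum_nat_add_iff' 1]
    simpa using hC
  unfold hyperF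
  refine (HasSum.tsum_eq ?_).trans (show (s * A + (1 - s) * s * B) +
    (-s * z * A + -(b - s) * s * z * B) = _ by ring)
  refine (hD.add hE).congr_fun ?_ |> fun h => h
  intro n
  have hc := hyper_coef s hs n
  have hp := (poch_pos' (show 0 < s + 1 by linarith) n).ne'
  cases n with
  | zero =>
    simp [poch, e]
    field_simp
    ring
  | succ n =>
    have h1 : s + n ≠ 0 := by positivity
    have h2 : s + n + 1 ≠ 0 := by positivity
    have h3 : poch (s - 1) (n + 1) / poch (s + 1) (n + 1) = s * (s - 1) / ((s + n) * (s + n + 1)) := by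
      rw [eq_div_iff (by positivity), ← hc]; push_cast; ring
    have h4 : e (n + 1) = e n * (b + n) / (n + 1) := by
      simp only [he, poch_succ', Nat.factorial_succ]; push_cast
      field_simp
    have h5 : poch (s - 1) (n + 1) * poch b (n + 1) / (poch (s + 1) (n + 1) * ((n + 1).factorial : ℝ))
      = (poch (s - 1) (n + 1) / poch (s + 1) (n + 1)) * e (n + 1) := by
      simp only [he]; rw [div_mul_div_comm]
    rw [h5, h3]
    change _ = s * (e (n+1) * z ^ (n + 1)) + (1 - s) * s * (e (n + 1) / (s + (n + 1 : ℕ)) * z ^ (n + 1)) + (-s * z * (e n * z ^ n) +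
      -(b - s) * s * z * (e n / (s + n) * z ^ n))
    rw [h4]
    push_cast
    have h6 : s + ((n:ℝ) + 1) ≠ 0 := by positivity
    have h7 : (n:ℝ) + 1 ≠ 0 := by positivity
    rw [pow_succ]
    field_simp
    ring

lemma beta_cast (s b t : ℝ) (ht0 : 0 ≤ t) (ht1 : t ≤ 1) :
    (t : ℂ) ^ ((s : ℂ) - 1) * (1 - (t : ℂ)) ^ (((1 - b : ℝ) : ℂ) - 1) =
      ((t ^ (s - 1) * (1 - t) ^ (-b) : ℝ) : ℂ) := by
  rw [Complex.ofReal_mul, Complex.ofReal_cpow ht0, Complex.ofReal_cpow (by linarith)]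
  push_cast
  ring_nf

lemma incB_integrable (s b : ℝ) (hs : 0 < s) (hb : b < 1) :
    IntervalIntegrable (fun t : ℝ => t ^ (s - 1) * (1 - t) ^ (-b)) volume 0 1 := by
  have h := Complex.betaIntegral_convergent (u := (s : ℂ)) (v := ((1 - b : ℝ) : ℂ))
    (by simpa using hs) (by rw [Complex.ofReal_re]; linarith)
  rw [intervalIntegrable_iff, uIoc_of_le zero_le_one] at h ⊢
  refine IntegrableOn.congr_fun h.re (fun t ht => ?_) measurableSet_Ioc
  have := beta_cast s b t ht.1.le ht.2
  simp only [this]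
  simp

lemma incB_one (s b : ℝ) (hs : 0 < s) (hb : b < 1) :
    incB s b 1 = Real.Gamma s * Real.Gamma (1 - b) / Real.Gamma (s + (1 - b)) := by
  have h := Complex.betaIntegral_eq_Gamma_mul_div (s : ℂ) ((1 - b : ℝ) : ℂ)
    (by simpa using hs) (by rw [Complex.ofReal_re]; linarith)
  have e : Complex.betaIntegral (s : ℂ) ((1 - b : ℝ) : ℂ) = (incB s b 1 : ℂ) := by
    unfold Complex.betaIntegral incB
    rw [← intervalIntegral.integral_ofReal]
    apply intervalIntegral.integral_congr
    intro t ht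
    rw [uIcc_of_le zero_le_one] at ht
    exact beta_cast s b t ht.1 ht.2
  rw [e, ← Complex.ofReal_add, Complex.Gamma_ofReal, Complex.Gamma_ofReal, Complex.Gamma_ofReal] at h
  exact_mod_cast h

lemma incB_cont (s b : ℝ) (hs : 0 < s) (hb : b < 1) :
    ContinuousOn (incB s b) (Icc 0 1) := by
  have := intervalIntegral.continuousOn_primitive_interval' (incB_integrable s b hs hb)
    (a := 0) left_mem_uIcc
  rwa [uIcc_of_le zero_le_one] at this

lemma incB_mono (s b : ℝ) (hs : 0 < s) (hb : b < 1) :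
    MonotoneOn (incB s b) (Icc 0 1) := by
  intro x hx y hy hxy
  unfold incB
  apply intervalIntegral.integral_mono_interval le_rfl hx.1 hxy
  · rw [Filter.EventuallyLE, ae_restrict_iff' measurableSet_Ioc]
    refine Filter.Eventually.of_forall fun t ht => ?_
    have h1 : 0 ≤ 1 - t := by linarith [ht.2, hy.2]
    have h2 : 0 ≤ t := ht.1.le
    simp only [Pi.zero_apply]
    positivity
  · apply (incB_integrable s b hs hb).mono_set
    rw [uIcc_of_le zero_le_one, uIcc_of_le hy.1]
    exact Icc_subset_Icc_right hy.2

lemma incB_deriv (s b x : ℝ) (hs : 0 < s) (hb : b < 1) (hx0 : 0 < x) (hx : x < 1) :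
    HasDerivAt (incB s b) (x ^ (s - 1) * (1 - x) ^ (-b)) x := by
  unfold incB
  apply intervalIntegral.integral_hasDerivAt_right
  · apply (incB_integrable s b hs hb).mono_set
    rw [uIcc_of_le zero_le_one, uIcc_of_le hx0.le]
    exact Icc_subset_Icc_right hx.le
  · exact (by fun_prop : Measurable fun t : ℝ => t ^ (s - 1) * (1 - t) ^ (-b)).stronglyMeasurable.stronglyMeasurableAtFilter
  · apply ContinuousAt.mul
    · exact Real.continuousAt_rpow_const _ _ (Or.inl hx0.ne')
    · exact ContinuousAt.rpow_const (by fun_prop) (Or.inl (by linarith))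

/-- Closed form of `ψ` on `(1, ∞)`, up to the prefactor. -/
noncomputable def phi (s b r : ℝ) : ℝ :=
  s * r ^ (1 - s) * (1 - r⁻¹) ^ (1 - b) + ((1 - s) * r - (b - s)) * (s * incB s b r⁻¹)

lemma phi_eq (s b r : ℝ) (hs : 0 < s) (hr : 1 < r) :
    r ^ (1 - s) * hyperF (s - 1) b (s + 1) r⁻¹ = phi s b r := by
  have h0 : 0 < r := by linarith
  have hz : r⁻¹ < 1 := inv_lt_one_of_one_lt₀ hr
  rw [hyper_eq s b r⁻¹ hs (by positivity) hz, phi, Real.inv_rpow h0.le, Real.rpow_neg h0.le,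
    inv_inv, show 1 - b = -b + 1 by ring, Real.rpow_add_one (by linarith), sub_eq_add_neg 1 s,
    Real.rpow_add h0, Real.rpow_one, Real.rpow_neg h0.le]
  have : r ^ s ≠ 0 := (Real.rpow_pos_of_pos h0 _).ne'
  field_simp

lemma phi_cont (s b : ℝ) (hs : 0 < s) (hb : b < 1) : ContinuousOn (phi s b) (Ici 1) := by
  have hinv : ContinuousOn (fun r : ℝ => r⁻¹) (Ici 1) := by
    apply ContinuousOn.inv₀ continuousOn_id
    intro x hx
    have : (1:ℝ) ≤ x := hx
    simp only [id]; linarith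
  have hB : ContinuousOn (fun r : ℝ => incB s b r⁻¹) (Ici 1) := by
    apply (incB_cont s b hs hb).comp hinv
    intro x hx
    have hx : (1:ℝ) ≤ x := hx
    exact ⟨by positivity, inv_le_one_of_one_le₀ hx⟩
  unfold phi
  apply ContinuousOn.add
  · apply ContinuousOn.mul
    · apply ContinuousOn.mul continuousOn_const
      apply ContinuousOn.rpow_const continuousOn_id
      intro x hx
      have : (1:ℝ) ≤ x := hx
      left; simp only [id]; linarith
    · apply ContinuousOn.rpow_const (continuousOn_const.sub hinv)
      intro x hx
      right; linarith
  · apply ContinuousOn.mul (by fun_prop)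
    exact continuousOn_const.mul hB

lemma phi_deriv (s b r : ℝ) (hs : 0 < s) (hb : b < 1) (hr : 1 < r) :
    HasDerivAt (phi s b) ((1 - s) * s * incB s b r⁻¹) r := by
  have h0 : 0 < r := by linarith
  have hz : r⁻¹ < 1 := inv_lt_one_of_one_lt₀ hr
  have hinv := hasDerivAt_inv h0.ne'
  have hB := (incB_deriv s b r⁻¹ hs hb (by positivity) hz).comp r hinv
  have h1 := (Real.hasDerivAt_rpow_const (p := 1 - s) (Or.inl h0.ne')).const_mul s
  have h2 := ((hasDerivAt_const r (1:ℝ)).sub hinv).rpow_const (p := 1 - b) (Or.inl (by simp; linarith))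
  have h3 := (((hasDerivAt_id r).const_mul (1 - s)).sub_const (b - s)).mul (hB.const_mul s)
  have h := (h1.mul h2).add h3
  refine HasDerivAt.congr_deriv (f := phi s b) h ?_
  simp only [Pi.sub_apply, Function.comp, id]
  have hw : 0 < 1 - r⁻¹ := by linarith
  rw [show 1 - b = -b + 1 by ring, Real.rpow_add_one hw.ne', Real.inv_rpow h0.le,
    show -b + 1 - 1 = -b by ring, show 1 - s - 1 = - s by ring, Real.rpow_neg h0.le,
    Real.rpow_sub h0, Real.rpow_sub h0, Real.rpow_one]
  have : r ^ s ≠ 0 := (Real.rpow_pos_of_pos h0 _).ne'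
  generalize (1 - r⁻¹) ^ (-b) = W
  field_simp
  ring

theorem psi_concave_alpha_two (d : ℕ) (hd : 1 ≤ d) (β : ℝ) (hβ0 : 0 < β)
    (hβu : β < min 2 (4 - (d : ℝ))) :
    ∃ ψ : ℝ → ℝ,
      (∀ ρ ∈ Set.Icc (0 : ℝ) 1, ψ ρ = 1 + β / (d : ℝ) * ρ) ∧
      (∀ ρ : ℝ, 1 < ρ →
        ψ ρ = Real.Gamma ((d : ℝ) / 2) / (Real.Gamma (2 - β / 2) * Real.Gamma ((β + (d : ℝ)) / 2)) *
          ρ ^ (β / 2) * hyperF (-β / 2) ((2 - β - (d : ℝ)) / 2) (2 - β / 2) ρ⁻¹) ∧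
      ContDiffOn ℝ 1 ψ (Set.Ici 0) ∧
      ConcaveOn ℝ (Set.Ioi (1 : ℝ)) ψ ∧
      (∀ ρ : ℝ, 1 ≤ ρ → ψ ρ ≤ ψ 1 + deriv ψ 1 * (ρ - 1)) := by
  have hβ2 : β < 2 := lt_of_lt_of_le hβu (min_le_left _ _)
  have hd1 : (1:ℝ) ≤ d := by exact_mod_cast hd
  obtain ⟨s, hs⟩ : ∃ s, s = 1 - β / 2 := ⟨_, rfl⟩
  obtain ⟨b, hb⟩ : ∃ b, b = (2 - β - (d : ℝ)) / 2 := ⟨_, rfl⟩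
  have hs0 : 0 < s := by linarith
  have hs1 : s < 1 := by linarith
  have hb1 : b < 1 := by linarith
  rw [← hb, show -β / 2 = s - 1 by linarith, show 2 - β / 2 = s + 1 by linarith,
    show β / 2 = 1 - s by linarith, show (β + d) / 2 = 1 - b by linarith]
  set K := Real.Gamma ((d : ℝ) / 2) / (Real.Gamma (s + 1) * Real.Gamma (1 - b)) with hK
  have hKpos : 0 < K := by
    have h1 := Real.Gamma_pos_of_pos (show 0 < (d:ℝ) / 2 by linarith)
    have h2 := Real.Gamma_pos_of_pos (show 0 < s + 1 by linarith)
    have h3 := Real.Gamma_pos_of_pos (show 0 < 1 - b by linarith)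
    positivity
  have hI1 : K * (s * incB s b 1) = 2 / d := by
    rw [incB_one s b hs0 hb1, hK, show s + (1 - b) = (d:ℝ) / 2 + 1 by linarith,
      Real.Gamma_add_one hs0.ne', Real.Gamma_add_one (by linarith)]
    have h1 := (Real.Gamma_pos_of_pos (show 0 < (d:ℝ) / 2 by linarith)).ne'
    have h2 := (Real.Gamma_pos_of_pos hs0).ne'
    have h3 := (Real.Gamma_pos_of_pos (show 0 < 1 - b by linarith)).ne'
    have h4 : (d:ℝ) ≠ 0 := by linarith
    field_simp
  obtain ⟨g, hg⟩ : ∃ g : ℝ → ℝ, g = fun r => K * ((1 - s) * s * incB s b (max r 1)⁻¹) := ⟨_, rfl⟩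
  have hmem : ∀ r : ℝ, (max r 1)⁻¹ ∈ Icc (0:ℝ) 1 := fun r =>
    ⟨by positivity, inv_le_one_of_one_le₀ (le_max_right _ _)⟩
  have hgc : Continuous g := by
    have : Continuous fun r : ℝ => incB s b (max r 1)⁻¹ := by
      apply (incB_cont s b hs0 hb1).comp_continuous _ hmem
      exact (by fun_prop : Continuous fun r : ℝ => max r 1).inv₀ fun r =>
        (lt_of_lt_of_le one_pos (le_max_right r 1)).ne'
    rw [hg]; fun_prop
  have hga : Antitone g := by
    intro x y hxy
    have h1 : incB s b (max y 1)⁻¹ ≤ incB s b (max x 1)⁻¹ := by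
      apply incB_mono s b hs0 hb1 (hmem y) (hmem x)
      gcongr
    have : 0 < 1 - s := by linarith
    simp only [hg]
    gcongr
  have hg1 : ∀ r ≤ 1, g r = β / d := by
    intro r hr
    simp only [hg, max_eq_right hr, inv_one]
    calc _ = (1 - s) * (K * (s * incB s b 1)) := by ring
      _ = _ := by rw [hI1, show 1 - s = β / 2 by linarith]; ring
  obtain ⟨ψ, hψ⟩ : ∃ ψ : ℝ → ℝ, ψ = fun r => 1 + ∫ t in (0:ℝ)..r, g t := ⟨_, rfl⟩
  have hder : ∀ r, HasDerivAt ψ (g r) r := by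
    intro r
    rw [hψ]
    exact (intervalIntegral.integral_hasDerivAt_right (hgc.intervalIntegrable _ _)
      hgc.aestronglyMeasurable.stronglyMeasurableAtFilter hgc.continuousAt).const_add 1
  have hderiv : deriv ψ = g := funext fun r => (hder r).deriv
  have hdiff : Differentiable ℝ ψ := fun r => (hder r).differentiableAt
  have hP1 : ∀ r ∈ Icc (0:ℝ) 1, ψ r = 1 + β / d * r := by
    intro r hr
    have : ∫ t in (0:ℝ)..r, g t = ∫ t in (0:ℝ)..r, β / d := by
      apply intervalIntegral.integral_congr
      intro t ht
      rw [uIcc_of_le hr.1] at ht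
      exact hg1 t (ht.2.trans hr.2)
    simp only [hψ, this, intervalIntegral.integral_const, smul_eq_mul]
    ring
  refine ⟨ψ, hP1, ?_, ?_, ?_, ?_⟩
  · intro r hr
    rw [mul_assoc, phi_eq s b r hs0 hr]
    obtain ⟨c, hc, hc'⟩ := exists_hasDerivAt_eq_slope (fun x => ψ x - K * phi s b x)
      (fun x => g x - K * ((1 - s) * s * incB s b x⁻¹)) hr
      (hdiff.continuous.continuousOn.sub (continuousOn_const.mul
        ((phi_cont s b hs0 hb1).mono Icc_subset_Ici_self)))
      (fun x hx => (hder x).sub ((phi_deriv s b x hs0 hb1 hx.1).const_mul K))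
    have h0 : g c = K * ((1 - s) * s * incB s b c⁻¹) := by
      simp only [hg, max_eq_left hc.1.le]
    rw [h0, sub_self, eq_comm, div_eq_zero_iff] at hc'
    have h1 : ψ 1 = K * phi s b 1 := by
      rw [hP1 1 ⟨zero_le_one, le_rfl⟩]
      have hp : K * phi s b 1 = (1 - b) * (K * (s * incB s b 1)) := by
        simp only [phi, inv_one, sub_self, Real.zero_rpow (show 1 - b ≠ 0 by linarith)]
        ring
      have hd0 : (d:ℝ) ≠ 0 := by linarith
      rw [hp, hI1, hb]
      field_simp
      ring
    rcases hc' with h | h <;> linarith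
  · exact (contDiff_one_iff_deriv.2 ⟨hdiff, hderiv ▸ hgc⟩).contDiffOn
  · apply AntitoneOn.concaveOn_of_deriv (convex_Ioi 1) hdiff.continuous.continuousOn
      hdiff.differentiableOn
    rw [hderiv]
    exact hga.antitoneOn _
  · intro r hr
    rcases hr.eq_or_lt with rfl | hr
    · simp
    obtain ⟨c, hc, hc'⟩ := exists_hasDerivAt_eq_slope ψ g hr hdiff.continuous.continuousOn
      (fun x _ => hder x)
    rw [eq_div_iff (by linarith)] at hc'
    have h1 : g c ≤ g 1 := hga hc.1.le
    rw [hderiv]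
    nlinarith [mul_le_mul_of_nonneg_right h1 (show 0 ≤ r - 1 by linarith)]
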